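/- arXiv:1805.09552 — 5 statements merged into one kernel-verified Lean document; each statement's English description precedes it below -/
import Mathlib

section
/- Let Ω be a countable set, p : Ω × Ω → [0,∞) a nonnegative kernel with G_p(s,t) < ∞ for all s,t ∈ Ω, b : Ω × Ω → ℝ a kernel with |b(s,t)| ≤ p(s,t) for all s,t, and Δ ⊆ Ω a subset. Then the series defining G_b (the Green kernel of b on Ω) and G_{b,Δ} (the Green kernel of the restriction of b to Δ × Δ) converge absolutely, and for all s,t ∈ Δ: |G_b(s,t) − G_{b,Δ}(s,t)| ≤ G_p(s,t) − G_{p,Δ}(s,t). (Comparison inequality used in the proof of Proposition 3.5 of the paper.) -/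
open scoped ENNReal

namespace Paper

/-- Words in the two letters `α, β`: the free monoid on two generators, as `List Bool`.
The head of the list is the leftmost letter. -/
abbrev Word := List Bool

/-- Length of the longest common prefix of two lists. -/
def lcpLen : List Bool → List Bool → ℕ
  | a :: s, b :: t => if a = b then lcpLen s t + 1 else 0
  | _, _ => 0

/-- Length of the longest common suffix of two words. -/
def lcsLen (s t : Word) : ℕ := lcpLen s.reverse t.reverse

/-- The tree metric on `Word`: `d(s,t) = (|s| - k) + (|t| - k)`, `k` the length of the
longest common suffix. -/
def treeDist (s t : Word) : ℕ := (s.length - lcsLen s t) + (t.length - lcsLen s t)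

/-- The branch `Δ_x = {u x : u ∈ I}` of words having `x` as a suffix. -/
def Delta (x : Word) : Set Word := {s | x <:+ s}

/-- The geodesic segment `[s,t] = {v : d(s,v) + d(v,t) = d(s,t)}`. -/
def geodesic (s t : Word) : Set Word := {v | treeDist s v + treeDist v t = treeDist s t}

/-- Paths of `n` steps from `s` to `t` staying in `Ω`. -/
def pathSet {X : Type*} (Ω : Set X) (n : ℕ) (s t : X) : Set (Fin (n + 1) → X) :=
  {σ | σ 0 = s ∧ σ (Fin.last n) = t ∧ ∀ i, σ i ∈ Ω}

/-- The weight `∏ a(s_i, s_{i+1})` of a path, as an extended nonnegative real. -/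
noncomputable def weightE {X : Type*} (a : X → X → ℝ) (n : ℕ) (σ : Fin (n + 1) → X) : ℝ≥0∞ :=
  ∏ i : Fin n, ENNReal.ofReal (a (σ i.castSucc) (σ i.succ))

/-- The `n`-step kernel `a⁽ⁿ⁾(s,t)` of the kernel `a` on `Ω`, with values in `[0,∞]`. -/
noncomputable def nStepE {X : Type*} (Ω : Set X) (a : X → X → ℝ) (n : ℕ) (s t : X) : ℝ≥0∞ :=
  ∑' σ : pathSet Ω n s t, weightE a n σ.1

/-- The Green kernel `G_a(s,t) = Σ_n a⁽ⁿ⁾(s,t)` of `a` on `Ω`, with values in `[0,∞]`. -/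
noncomputable def greenE {X : Type*} (Ω : Set X) (a : X → X → ℝ) (s t : X) : ℝ≥0∞ :=
  ∑' n : ℕ, nStepE Ω a n s t

/-- The weight of a path, real version (for signed kernels). -/
noncomputable def weightR {X : Type*} (a : X → X → ℝ) (n : ℕ) (σ : Fin (n + 1) → X) : ℝ :=
  ∏ i : Fin n, a (σ i.castSucc) (σ i.succ)

/-- The `n`-step kernel of a signed kernel `a` on `Ω`. -/
noncomputable def nStepR {X : Type*} (Ω : Set X) (a : X → X → ℝ) (n : ℕ) (s t : X) : ℝ :=
  ∑' σ : pathSet Ω n s t, weightR a n σ.1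

/-- The Green kernel of a signed kernel `a` on `Ω`, as a real number. -/
noncomputable def greenR {X : Type*} (Ω : Set X) (a : X → X → ℝ) (s t : X) : ℝ :=
  ∑' n : ℕ, nStepR Ω a n s t

/-- The Green kernel of `|a|`: finiteness of this expresses absolute convergence of the
series defining the Green kernel of `a`. -/
noncomputable def greenAbs {X : Type*} (Ω : Set X) (a : X → X → ℝ) (s t : X) : ℝ≥0∞ :=
  greenE Ω (fun u v => |a u v|) s t

/-- (H1): finite range `S`. -/
def H1 (p : Word → Word → ℝ) (S : ℕ) : Prop := ∀ s t, S < treeDist s t → p s t = 0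

/-- (H2): nonzero transition probabilities are bounded below by `δ₀`. -/
def H2 (p : Word → Word → ℝ) (δ₀ : ℝ) : Prop := ∀ s t, 0 < p s t → δ₀ ≤ p s t

/-- (H3): uniform irreducibility. -/
def H3 (p : Word → Word → ℝ) (δ₀ : ℝ) (K : ℕ) : Prop :=
  ∀ s t, treeDist s t = 1 → ∃ k ≤ K, ∃ u : ℕ → Word, u 0 = s ∧ u k = t ∧
    ∀ i < k, ∀ x : Word, δ₀ ≤ p (u i ++ x) (u (i + 1) ++ x)

/-- The operator `(Pf)(s) = Σ_t p(s,t) f(t)` extends to a bounded operator of norm at most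
`lam` on `ℓ²(X, m)`, expressed via the associated bilinear form on finitely supported
functions. -/
def opNormBound {X : Type*} (m : X → ℝ) (p : X → X → ℝ) (lam : ℝ) : Prop :=
  ∀ f g : X → ℝ, (Function.support f).Finite → (Function.support g).Finite →
    |∑' s, m s * g s * ∑' t, p s t * f t| ≤
      lam * Real.sqrt (∑' x, m x * f x ^ 2) * Real.sqrt (∑' x, m x * g x ^ 2)

/-- (H4): there is a weight `m` for which `P` is bounded of norm at most `lam` on `ℓ²(I,m)`. -/
def H4 (p : Word → Word → ℝ) (m : Word → ℝ) (lam : ℝ) : Prop :=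
  (∀ x, 0 < m x) ∧ opNormBound m p lam

/-- Substochasticity: `Σ_t p(s,t) ≤ 1` for every `s`. -/
def Substochastic (p : Word → Word → ℝ) : Prop :=
  ∀ s, (∑' t, ENNReal.ofReal (p s t)) ≤ 1

/-- `b` is a `q`-perturbation of `p` on `Δ_z` (with constant `C`). -/
def Perturb (p b : Word → Word → ℝ) (z : Word) (q C : ℝ) : Prop :=
  ∀ s t, s ∈ Delta z → t ∈ Delta z →
    |b s t| ≤ p s t ∧ |b s t - p s t| ≤ C * q ^ s.length

/-- The word `ω|k = ω(k-1) ω(k-2) ⋯ ω(0)` of length `k` determined by an end `ω`. -/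
def endWord (ω : ℕ → Bool) (k : ℕ) : Word := (List.range k).reverse.map ω

/-- The last-entrance kernel `M_p(s,u)`: sum over paths from `s` to `u` of length at least
one whose second-to-last point lies outside `Δ_x`. -/
noncomputable def lastEnter (p : Word → Word → ℝ) (x s u : Word) : ℝ≥0∞ :=
  ∑' m : ℕ, ∑' σ : {σ : Fin (m + 2) → Word //
      σ ∈ pathSet Set.univ (m + 1) s u ∧ σ ((Fin.last m).castSucc) ∉ Delta x},
    weightE p (m + 1) σ.1

/-- The quantum integer `[n]_q = (q⁻ⁿ - qⁿ)/(q⁻¹ - q)`. -/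
noncomputable def qInt (q : ℝ) (n : ℕ) : ℝ := (q ^ (-(n : ℤ)) - q ^ (n : ℤ)) / (q⁻¹ - q)

/-- The lengths of the blocks in the canonical factorization of a word into maximal
alternating subwords. -/
def blockLens : Word → List ℕ
  | [] => []
  | [_] => [1]
  | a :: b :: rest =>
    match blockLens (b :: rest) with
    | [] => [1]
    | k :: ks => if a = b then 1 :: (k :: ks) else (k + 1) :: ks

/-- The quantum dimension `dim_q(x) = Π_i [|x_i| + 1]_q` over the blocks of `x`. -/
noncomputable def dimq (q : ℝ) (x : Word) : ℝ := ((blockLens x).map fun L => qInt q (L + 1)).prod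

/-- The classical dimension `dim(x) = Π_i (|x_i| + 1)` over the blocks of `x`. -/
noncomputable def dimn (x : Word) : ℝ := ((blockLens x).map fun L => (L + 1 : ℝ)).prod

/-- The involution `x ↦ x̄`: reverse the word and exchange the two letters. -/
def bar (x : Word) : Word := (x.map fun a => !a).reverse

/-- The fusion multiplicity `mᵗ_{r,s}`: the number of words `z` such that `r = r₀ z`,
`s = z̄ s₀`, `t = r₀ s₀` for some `r₀, s₀`. -/
noncomputable def fuse (r s t : Word) : ℕ :=
  {z : Word | ∃ r₀ s₀ : Word, r = r₀ ++ z ∧ s = bar z ++ s₀ ∧ t = r₀ ++ s₀}.ncard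

/-- A finitely supported probability measure on `Word`. -/
def IsProbMeasure (μ : Word → ℝ) : Prop :=
  (∀ x, 0 ≤ μ x) ∧ (Function.support μ).Finite ∧ ∑' x, μ x = 1

/-- The transition kernel `p_μ(s,t) = Σ_r μ(r) mᵗ_{r,s} dim_q(t)/(dim_q(r) dim_q(s))`. -/
noncomputable def pMu (q : ℝ) (μ : Word → ℝ) (s t : Word) : ℝ :=
  ∑' r, μ r * (fuse r s t : ℝ) * dimq q t / (dimq q r * dimq q s)

/-- The `q`-binomial coefficient. -/
noncomputable def qbinom (q : ℝ) (n k : ℕ) : ℝ :=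
  q ^ (-((k * (n - k) : ℕ) : ℤ)) *
    ∏ i ∈ Finset.range k, (1 - q ^ (2 * (n - i))) / (1 - q ^ (2 * (k - i)))


open Classical in
/-- Signed weight on all paths, cut off outside the path set. -/
noncomputable def cutW {X : Type*} (Ω : Set X) (a : X → X → ℝ) (s t : X)
    (y : Σ n : ℕ, (Fin (n + 1) → X)) : ℝ :=
  (pathSet Ω y.1 s t).indicator (weightR a y.1) y.2

lemma weightE_eq {X : Type*} (p : X → X → ℝ) (hp : ∀ s t, 0 ≤ p s t) (n : ℕ)
    (σ : Fin (n + 1) → X) : weightE p n σ = ENNReal.ofReal (weightR p n σ) := by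
  unfold weightE weightR
  rw [ENNReal.ofReal_prod_of_nonneg]
  intro i _
  exact hp _ _

lemma weightR_abs_le {X : Type*} (p b : X → X → ℝ) (hb : ∀ s t, |b s t| ≤ p s t) (n : ℕ)
    (σ : Fin (n + 1) → X) : |weightR b n σ| ≤ weightR p n σ := by
  unfold weightR
  rw [Finset.abs_prod]
  exact Finset.prod_le_prod (fun _ _ => abs_nonneg _) (fun _ _ => hb _ _)

lemma weightR_nonneg {X : Type*} (p : X → X → ℝ) (hp : ∀ s t, 0 ≤ p s t) (n : ℕ)
    (σ : Fin (n + 1) → X) : 0 ≤ weightR p n σ :=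
  Finset.prod_nonneg (fun _ _ => hp _ _)

lemma greenE_eq {X : Type*} (Ω : Set X) (p : X → X → ℝ) (hp : ∀ s t, 0 ≤ p s t) (s t : X) :
    greenE Ω p s t = ∑' y, ENNReal.ofReal (cutW Ω p s t y) := by
  rw [ENNReal.tsum_sigma']
  unfold greenE nStepE
  congr 1
  ext n
  rw [tsum_subtype (pathSet Ω n s t) (weightE p n)]
  congr 1
  ext σ
  by_cases h : σ ∈ pathSet Ω n s t <;> simp [cutW, h, weightE_eq p hp]

lemma cutW_nonneg {X : Type*} (Ω : Set X) (p : X → X → ℝ) (hp : ∀ s t, 0 ≤ p s t) (s t : X)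
    (y : Σ n : ℕ, (Fin (n + 1) → X)) : 0 ≤ cutW Ω p s t y :=
  Set.indicator_nonneg (fun _ _ => weightR_nonneg p hp _ _) _

lemma cutW_abs_le {X : Type*} (Ω : Set X) (p b : X → X → ℝ) (hb : ∀ s t, |b s t| ≤ p s t)
    (s t : X) (y : Σ n : ℕ, (Fin (n + 1) → X)) : |cutW Ω b s t y| ≤ cutW Ω p s t y := by
  by_cases h : y.2 ∈ pathSet Ω y.1 s t <;> simp [cutW, h, weightR_abs_le p b hb]

lemma summable_cutW {X : Type*} (Ω : Set X) (p b : X → X → ℝ) (hp : ∀ s t, 0 ≤ p s t)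
    (hb : ∀ s t, |b s t| ≤ p s t) (s t : X) (h : greenE Ω p s t < ⊤) :
    Summable (cutW Ω b s t) := by
  rw [greenE_eq Ω p hp] at h
  have h1 := ENNReal.summable_toReal h.ne
  simp only [ENNReal.toReal_ofReal (cutW_nonneg Ω p hp s t _)] at h1
  exact Summable.of_norm_bounded h1 (fun y => cutW_abs_le Ω p b hb s t y)

lemma greenR_eq {X : Type*} (Ω : Set X) (b : X → X → ℝ) (s t : X)
    (h : Summable (cutW Ω b s t)) : greenR Ω b s t = ∑' y, cutW Ω b s t y := by
  rw [h.tsum_sigma]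
  unfold greenR nStepR
  congr 1
  ext n
  rw [tsum_subtype (pathSet Ω n s t) (weightR b n)]
  rfl

lemma greenE_toReal {X : Type*} (Ω : Set X) (p : X → X → ℝ) (hp : ∀ s t, 0 ≤ p s t) (s t : X) :
    (greenE Ω p s t).toReal = ∑' y, cutW Ω p s t y := by
  rw [greenE_eq Ω p hp, ENNReal.tsum_toReal_eq (fun _ => ENNReal.ofReal_ne_top)]
  simp only [ENNReal.toReal_ofReal (cutW_nonneg Ω p hp s t _)]

lemma greenE_mono {X : Type*} (Ω : Set X) (p q : X → X → ℝ) (hq : ∀ s t, 0 ≤ q s t)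
    (hqp : ∀ s t, q s t ≤ p s t) (s t : X) :
    greenE Ω q s t ≤ greenE Ω p s t := by
  rw [greenE_eq Ω p (fun s t => (hq s t).trans (hqp s t)), greenE_eq Ω q hq]
  refine ENNReal.tsum_le_tsum fun y => ENNReal.ofReal_le_ofReal ?_
  exact (le_abs_self _).trans
    (cutW_abs_le Ω p q (fun s t => by rw [abs_of_nonneg (hq s t)]; exact hqp s t) s t y)

lemma cutW_diff {X : Type*} (Δ : Set X) (p b : X → X → ℝ) (hp : ∀ s t, 0 ≤ p s t)
    (hb : ∀ s t, |b s t| ≤ p s t)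
    (s t : X) (y : Σ n : ℕ, (Fin (n + 1) → X)) :
    |cutW Set.univ b s t y - cutW Δ b s t y| ≤ cutW Set.univ p s t y - cutW Δ p s t y := by
  by_cases h : y.2 ∈ pathSet Δ y.1 s t
  · have h' : y.2 ∈ pathSet Set.univ y.1 s t := ⟨h.1, h.2.1, fun _ => trivial⟩
    simp [cutW, h, h']
  · have e : ∀ a : X → X → ℝ, cutW Δ a s t y = 0 := fun a => by simp [cutW, h]
    rw [e, e, sub_zero, sub_zero]
    exact cutW_abs_le _ p b hb s t y

lemma greenE_mono_set {X : Type*} (Δ : Set X) (p : X → X → ℝ) (hp : ∀ s t, 0 ≤ p s t) (s t : X) :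
    greenE Δ p s t ≤ greenE Set.univ p s t := by
  rw [greenE_eq _ p hp, greenE_eq _ p hp]
  refine ENNReal.tsum_le_tsum fun y => ENNReal.ofReal_le_ofReal ?_
  have := (abs_nonneg _).trans
    (cutW_diff Δ p p hp (fun s t => (abs_of_nonneg (hp s t)).le) s t y)
  linarith

/-- Comparison inequality from the proof of Proposition 3.5: if `|b| ≤ p` and `G_p` is
everywhere finite, then the Green series of `b` and of its restriction to `Δ` converge
absolutely and `|G_b(s,t) − G_{b,Δ}(s,t)| ≤ G_p(s,t) − G_{p,Δ}(s,t)` on `Δ`. -/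
theorem green_restriction_comparison {X : Type*} [Countable X]
    (p : X → X → ℝ) (hp : ∀ s t, 0 ≤ p s t)
    (hfin : ∀ s t, greenE Set.univ p s t < ⊤)
    (b : X → X → ℝ) (hb : ∀ s t, |b s t| ≤ p s t) (Δ : Set X) :
    ∀ s ∈ Δ, ∀ t ∈ Δ,
      greenAbs Set.univ b s t < ⊤ ∧ greenAbs Δ b s t < ⊤ ∧
      |greenR Set.univ b s t - greenR Δ b s t| ≤
        (greenE Set.univ p s t).toReal - (greenE Δ p s t).toReal := by
  intro s _ t _
  have hΔ : greenE Δ p s t < ⊤ := (greenE_mono_set Δ p hp s t).trans_lt (hfin s t)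
  have hpp : ∀ s t, |p s t| ≤ p s t := fun s t => (abs_of_nonneg (hp s t)).le
  refine ⟨(greenE_mono _ p _ (fun _ _ => abs_nonneg _) hb s t).trans_lt (hfin s t),
    (greenE_mono _ p _ (fun _ _ => abs_nonneg _) hb s t).trans_lt hΔ, ?_⟩
  have b1 := summable_cutW _ p b hp hb s t (hfin s t)
  have b2 := summable_cutW _ p b hp hb s t hΔ
  have p1 := summable_cutW _ p p hp hpp s t (hfin s t)
  have p2 := summable_cutW _ p p hp hpp s t hΔ
  rw [greenR_eq _ _ _ _ b1, greenR_eq _ _ _ _ b2, greenE_toReal _ p hp, greenE_toReal _ p hp,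
    ← b1.tsum_sub b2, ← p1.tsum_sub p2]
  rw [← Real.norm_eq_abs]
  exact tsum_of_norm_bounded (p1.sub p2).hasSum (fun y => cutW_diff Δ p b hp hb s t y)

end Paper
end

section
/- Let p : I × I → [0,∞) satisfy hypotheses (H1), (H2) and (H3). Then there exists a constant C > 0, depending only on S, δ₀ and K, such that for all x ∈ I and all s,t ∈ Δ_x, the following inequality holds in [0,∞]: G_p(s,t) ≤ G_{p,Δ_x}(s,t) + C·G_p(s,x)·G_p(x,t). (Estimate established in the proof of Proposition 3.5 of the paper.) -/
open scoped ENNReal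

namespace Paper

section helpers

open Classical in
lemma nStepE_zero {X : Type*} (Ω : Set X) (a : X → X → ℝ) (s t : X) :
    nStepE Ω a 0 s t = if s = t ∧ s ∈ Ω then 1 else 0 := by
  unfold nStepE
  rw [tsum_subtype (pathSet Ω 0 s t) (fun σ => weightE a 0 σ)]
  rw [← (Equiv.funUnique (Fin 1) X).symm.tsum_eq]
  rw [tsum_eq_single s]
  · simp only [Set.indicator_apply, pathSet, weightE]
    simp
  · intro b hb
    simp only [Set.indicator_apply, pathSet]
    simp [hb]

open Classical in
lemma nStepE_succ {X : Type*} (Ω : Set X) (a : X → X → ℝ) (n : ℕ) (s t : X) (hs : s ∈ Ω) :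
    nStepE Ω a (n + 1) s t = ∑' u, ENNReal.ofReal (a s u) * nStepE Ω a n u t := by
  unfold nStepE
  rw [tsum_subtype (pathSet Ω (n + 1) s t) (fun σ => weightE a (n + 1) σ)]
  rw [← (Fin.consEquiv (fun _ : Fin (n + 2) => X)).tsum_eq]
  rw [ENNReal.tsum_prod']
  rw [tsum_eq_single s]
  · have h1 : ∀ u, ENNReal.ofReal (a s u) * ∑' σ : pathSet Ω n u t, weightE a n σ.1
        = ∑' τ : Fin (n + 1) → X,
          ENNReal.ofReal (a s u) * (pathSet Ω n u t).indicator (fun σ => weightE a n σ) τ := by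
      intro u
      rw [tsum_subtype (pathSet Ω n u t) (fun σ => weightE a n σ), ENNReal.tsum_mul_left]
    simp_rw [h1]
    rw [ENNReal.tsum_comm]
    refine tsum_congr fun τ => ?_
    rw [tsum_eq_single (τ 0)]
    · simp only [Set.indicator_apply, pathSet, Set.mem_ofPred_eq, Fin.consEquiv_apply,
        Fin.cons_zero, true_and]
      have h2 : ((Fin.cons s τ : Fin (n + 2) → X) (Fin.last (n + 1)) = t ∧
          ∀ i, (Fin.cons s τ : Fin (n + 2) → X) i ∈ Ω) ↔ (τ (Fin.last n) = t ∧ ∀ i, τ i ∈ Ω) := by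
        rw [← Fin.succ_last, Fin.cons_succ, Fin.forall_fin_succ]
        simp [hs]
      simp only [h2, mul_ite, mul_zero]
      congr 1
      simp only [weightE]
      rw [Fin.prod_univ_succ]
      simp [← Fin.succ_castSucc]
    · intro u hu
      simp [Set.indicator_apply, pathSet, hu.symm]
  · intro b hb
    simp [Set.indicator_apply, pathSet, hb]

lemma nStepE_add_le {X : Type*} (a : X → X → ℝ) (m n : ℕ) (s u t : X) :
    nStepE Set.univ a m s u * nStepE Set.univ a n u t ≤ nStepE Set.univ a (m + n) s t := by
  classical
  induction m generalizing s with
  | zero =>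
    rw [nStepE_zero, zero_add]
    by_cases h : s = u
    · subst h; simp
    · simp [h]
  | succ m ih =>
    rw [show m + 1 + n = (m + n) + 1 by ring, nStepE_succ _ _ _ _ _ (Set.mem_univ _),
      nStepE_succ _ _ _ _ _ (Set.mem_univ _), ← ENNReal.tsum_mul_right]
    refine ENNReal.tsum_le_tsum fun v => ?_
    rw [mul_assoc]
    gcongr
    exact ih v

lemma nStepE_one {X : Type*} (a : X → X → ℝ) (s t : X) :
    nStepE Set.univ a 1 s t = ENNReal.ofReal (a s t) := by
  classical
  rw [nStepE_succ _ _ _ _ _ (Set.mem_univ _), tsum_eq_single t]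
  · simp [nStepE_zero]
  · intro b hb
    simp [nStepE_zero, hb]

lemma green_mul_right {X : Type*} (a : X → X → ℝ) (k : ℕ) (s u t : X) :
    greenE Set.univ a s u * nStepE Set.univ a k u t ≤ greenE Set.univ a s t := by
  unfold greenE
  rw [← ENNReal.tsum_mul_right]
  calc _ ≤ ∑' m, nStepE Set.univ a (m + k) s t :=
        ENNReal.tsum_le_tsum fun m => nStepE_add_le a m k s u t
    _ ≤ _ := ENNReal.tsum_comp_le_tsum_of_injective (add_left_injective k)
        (fun m => nStepE Set.univ a m s t)

lemma green_mul_left {X : Type*} (a : X → X → ℝ) (k : ℕ) (s u t : X) :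
    nStepE Set.univ a k s u * greenE Set.univ a u t ≤ greenE Set.univ a s t := by
  unfold greenE
  rw [← ENNReal.tsum_mul_left]
  calc _ ≤ ∑' m, nStepE Set.univ a (k + m) s t :=
        ENNReal.tsum_le_tsum fun m => nStepE_add_le a k m s u t
    _ ≤ _ := ENNReal.tsum_comp_le_tsum_of_injective (add_right_injective k)
        (fun m => nStepE Set.univ a m s t)

/-- first-exit upper bound -/
noncomputable def exitF {X : Type*} (a : X → X → ℝ) (B : Finset X) (n : ℕ) (s t : X) : ℝ≥0∞ :=
  ∑ v ∈ B, ∑ kl ∈ Finset.HasAntidiagonal.antidiagonal n,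
    nStepE Set.univ a kl.1 s v * nStepE Set.univ a kl.2 v t

lemma exitF_succ {X : Type*} (a : X → X → ℝ) (B : Finset X) (n : ℕ) (s t : X) :
    ∑' u, ENNReal.ofReal (a s u) * exitF a B n u t ≤ exitF a B (n + 1) s t := by
  classical
  unfold exitF
  simp_rw [Finset.mul_sum]
  rw [Summable.tsum_finsetSum (fun _ _ => ENNReal.summable)]
  refine Finset.sum_le_sum fun v _ => ?_
  rw [Summable.tsum_finsetSum (fun _ _ => ENNReal.summable), Finset.Nat.sum_antidiagonal_succ]
  refine le_trans (le_of_eq ?_) le_add_self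
  refine Finset.sum_congr rfl fun kl _ => ?_
  rw [nStepE_succ _ _ _ _ _ (Set.mem_univ _), ← ENNReal.tsum_mul_right]
  exact tsum_congr fun u => (mul_assoc _ _ _).symm

lemma nStep_exit {X : Type*} (a : X → X → ℝ) (Ω : Set X) (B : Finset X)
    (hB : ∀ s ∈ Ω, ∀ u, a s u ≠ 0 → u ∈ Ω ∨ u ∈ B) (n : ℕ) (s t : X) (hs : s ∈ Ω ∨ s ∈ B) :
    nStepE Set.univ a n s t ≤ nStepE Ω a n s t + exitF a B n s t := by
  classical
  induction n generalizing s with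
  | zero =>
    rcases hs with hs | hs
    · refine le_trans ?_ le_self_add
      simp [nStepE_zero, hs]
    · refine le_trans ?_ le_add_self
      unfold exitF
      refine le_trans ?_ (Finset.single_le_sum (fun _ _ => zero_le) hs)
      simp [nStepE_zero]
  | succ n ih =>
    by_cases hΩ : s ∈ Ω
    · rw [nStepE_succ _ _ _ _ _ (Set.mem_univ _), nStepE_succ _ _ _ _ _ hΩ]
      refine le_trans ?_ (add_le_add_right (exitF_succ a B n s t) _)
      rw [← ENNReal.tsum_add]
      refine ENNReal.tsum_le_tsum fun u => ?_
      rw [← mul_add]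
      by_cases h0 : a s u = 0
      · simp [h0]
      · gcongr
        exact ih u (hB s hΩ u h0)
    · have hs' : s ∈ B := hs.resolve_left hΩ
      refine le_trans ?_ le_add_self
      unfold exitF
      refine le_trans ?_ (Finset.single_le_sum (fun _ _ => zero_le) hs')
      rw [Finset.Nat.sum_antidiagonal_succ]
      refine le_trans ?_ le_self_add
      simp [nStepE_zero]

lemma tsum_anti (f g : ℕ → ℝ≥0∞) :
    ∑' n, ∑ kl ∈ Finset.HasAntidiagonal.antidiagonal n, f kl.1 * g kl.2 = (∑' n, f n) * ∑' n, g n := by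
  have h : ∀ n, ∑ kl ∈ Finset.HasAntidiagonal.antidiagonal n, f kl.1 * g kl.2
      = ∑' kl : Finset.HasAntidiagonal.antidiagonal n, f kl.1.1 * g kl.1.2 := by
    intro n
    rw [tsum_fintype, Finset.sum_coe_sort (Finset.HasAntidiagonal.antidiagonal n) (fun kl => f kl.1 * g kl.2)]
  simp_rw [h]
  rw [← ENNReal.tsum_sigma' (fun x : (Σ n : ℕ, Finset.HasAntidiagonal.antidiagonal n) =>
    f x.2.1.1 * g x.2.1.2)]
  rw [← Finset.HasAntidiagonal.sigmaAntidiagonalEquivProd.symm.tsum_eq, ENNReal.tsum_prod']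
  simp [Finset.HasAntidiagonal.sigmaAntidiagonalEquivProd, ENNReal.tsum_mul_left, ENNReal.tsum_mul_right]

lemma green_exit {X : Type*} (a : X → X → ℝ) (Ω : Set X) (B : Finset X)
    (hB : ∀ s ∈ Ω, ∀ u, a s u ≠ 0 → u ∈ Ω ∨ u ∈ B) (s t : X) (hs : s ∈ Ω) :
    greenE Set.univ a s t ≤ greenE Ω a s t +
      ∑ v ∈ B, greenE Set.univ a s v * greenE Set.univ a v t := by
  have : ∑ v ∈ B, greenE Set.univ a s v * greenE Set.univ a v t = ∑' n, exitF a B n s t := by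
    unfold exitF greenE
    rw [Summable.tsum_finsetSum (fun _ _ => ENNReal.summable)]
    exact Finset.sum_congr rfl fun v _ => (tsum_anti _ _).symm
  rw [this]
  unfold greenE
  rw [← ENNReal.tsum_add]
  exact ENNReal.tsum_le_tsum fun n => nStep_exit a Ω B hB n s t (Or.inl hs)

/-- words of length at most `S` -/
noncomputable def shortWords (S : ℕ) : Finset Word := (List.finite_length_le Bool S).toFinset

/-- exit ball -/
noncomputable def exitBall (S : ℕ) (x : Word) : Finset Word :=
  (shortWords S ×ˢ Finset.range (S + 1)).image fun q => q.1 ++ x.drop q.2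

lemma exitBall_card (S : ℕ) (x : Word) :
    (exitBall S x).card ≤ (shortWords S).card * (S + 1) := by
  refine Finset.card_image_le.trans ?_
  simp

lemma lcpLen_take (s t : List Bool) : s.take (lcpLen s t) = t.take (lcpLen s t) := by
  induction s generalizing t with
  | nil => cases t <;> simp [lcpLen]
  | cons a s ih =>
    cases t with
    | nil => simp [lcpLen]
    | cons b t =>
      by_cases h : a = b
      · simp [lcpLen, h, ih t]
      · simp [lcpLen, h]

lemma lcpLen_le (s t : List Bool) : lcpLen s t ≤ s.length ∧ lcpLen s t ≤ t.length := by
  induction s generalizing t with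
  | nil => cases t <;> simp [lcpLen]
  | cons a s ih =>
    cases t with
    | nil => simp [lcpLen]
    | cons b t =>
      by_cases h : a = b
      · simp [lcpLen, h, ih t]
      · simp [lcpLen, h]

lemma lcpLen_append (l m : List Bool) :
    lcpLen (l ++ m) l = l.length ∧ lcpLen l (l ++ m) = l.length := by
  induction l with
  | nil => cases m <;> simp [lcpLen]
  | cons a l ih => simp [lcpLen, ih]

lemma treeDist_cons (a : Bool) (l : Word) :
    treeDist (a :: l) l = 1 ∧ treeDist l (a :: l) = 1 := by
  simp [treeDist, lcsLen, lcpLen_append]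

lemma exit_mem (S : ℕ) (x s u : Word) (hs : s ∈ Delta x) (h : treeDist s u ≤ S) :
    u ∈ Delta x ∨ u ∈ exitBall S x := by
  by_cases hu : u ∈ Delta x
  · exact Or.inl hu
  right
  obtain ⟨r, rfl⟩ := hs
  have ht := lcpLen_take (r ++ x).reverse u.reverse
  have hl := lcpLen_le (r ++ x).reverse u.reverse
  unfold treeDist lcsLen at h
  set k := lcpLen (r ++ x).reverse u.reverse with hk
  rw [List.reverse_append] at ht
  simp only [List.length_reverse, List.length_append] at hl h
  have hkx : k < x.length := by
    by_contra hc
    push Not at hc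
    apply hu
    change x <:+ u
    rw [← List.reverse_prefix]
    have h1 : x.reverse <+: u.reverse.take k := by
      rw [← ht, List.take_append, List.take_of_length_le (by simpa using hc)]
      exact List.prefix_append _ _
    exact h1.trans (List.take_prefix _ _)
  rw [List.take_append_of_le_length (by simpa using hkx.le), List.take_reverse, List.take_reverse,
    List.reverse_inj] at ht
  refine Finset.mem_image.2 ⟨(u.take (u.length - k), x.length - k), ?_, ?_⟩
  · simp [shortWords]
    omega
  · simp only
    rw [ht, List.take_append_drop]

/-- reachability in at most `n` steps with weights at least `δ` -/
def Reach (p : Word → Word → ℝ) (δ : ℝ) (n : ℕ) (s t : Word) : Prop :=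
  ∃ k ≤ n, ENNReal.ofReal δ ^ k ≤ nStepE Set.univ p k s t

lemma Reach.trans {p : Word → Word → ℝ} {δ : ℝ} {m n : ℕ} {s u t : Word}
    (h1 : Reach p δ m s u) (h2 : Reach p δ n u t) : Reach p δ (m + n) s t := by
  obtain ⟨k, hk, h⟩ := h1
  obtain ⟨l, hl, h'⟩ := h2
  refine ⟨k + l, by omega, ?_⟩
  rw [pow_add]
  exact (mul_le_mul' h h').trans (nStepE_add_le _ _ _ _ _ _)

lemma Reach.refl (p : Word → Word → ℝ) (δ : ℝ) (n : ℕ) (s : Word) : Reach p δ n s s :=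
  ⟨0, by simp, by classical simp [nStepE_zero]⟩

lemma Reach.step {p : Word → Word → ℝ} {δ : ℝ} {K : ℕ} (h3 : H3 p δ K) {s t : Word}
    (h : treeDist s t = 1) : Reach p δ K s t := by
  obtain ⟨k, hk, u, h0, h1, hu⟩ := h3 s t h
  have key : ∀ j ≤ k, ENNReal.ofReal δ ^ j ≤ nStepE Set.univ p j (u 0) (u j) := by
    intro j
    induction j with
    | zero => intro _; classical simp [nStepE_zero]
    | succ j ih =>
      intro hj
      refine le_trans ?_ (nStepE_add_le p j 1 (u 0) (u j) (u (j + 1)))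
      rw [pow_succ, nStepE_one]
      refine mul_le_mul' (ih (by omega)) (ENNReal.ofReal_le_ofReal ?_)
      simpa using hu j (by omega) []
  exact ⟨k, hk, by simpa [h0, h1] using key k le_rfl⟩

lemma Reach.word {p : Word → Word → ℝ} {δ : ℝ} {K : ℕ} (h3 : H3 p δ K) (w y : Word) :
    Reach p δ (w.length * K) (w ++ y) y ∧ Reach p δ (w.length * K) y (w ++ y) := by
  induction w with
  | nil => exact ⟨Reach.refl _ _ _ _, Reach.refl _ _ _ _⟩
  | cons a w ih =>
    have e : (a :: w).length * K = K + w.length * K := by simp; ring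
    constructor
    · rw [e]
      exact (Reach.step h3 (treeDist_cons a (w ++ y)).1).trans ih.1
    · rw [e, add_comm]
      exact ih.2.trans (Reach.step h3 (treeDist_cons a (w ++ y)).2)

lemma Reach.weaken {p : Word → Word → ℝ} {δ : ℝ} {m n : ℕ} {s t : Word}
    (h : Reach p δ m s t) (hmn : m ≤ n) : Reach p δ n s t := by
  obtain ⟨k, hk, h⟩ := h
  exact ⟨k, hk.trans hmn, h⟩

lemma reach_ball {p : Word → Word → ℝ} {δ : ℝ} {K : ℕ} (h3 : H3 p δ K) (S : ℕ) (x v : Word)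
    (hv : v ∈ exitBall S x) :
    Reach p δ (S * K + S * K) v x ∧ Reach p δ (S * K + S * K) x v := by
  obtain ⟨⟨w, k⟩, hq, rfl⟩ := Finset.mem_image.1 hv
  simp [shortWords] at hq
  have hw : w.length * K ≤ S * K := Nat.mul_le_mul_right _ hq.1
  have hz : (x.take k).length * K ≤ S * K := by
    apply Nat.mul_le_mul_right
    simp
    omega
  have r1 := Reach.word h3 w (x.drop k)
  have r2 := Reach.word h3 (x.take k) (x.drop k)
  rw [List.take_append_drop] at r2
  exact ⟨(r1.1.weaken hw).trans (r2.2.weaken hz), (r2.1.weaken hz).trans (r1.2.weaken hw)⟩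

end helpers

/-- Estimate from the proof of Proposition 3.5: there is a constant `C` depending only on
`S`, `δ₀` and `K` such that `G_p(s,t) ≤ G_{p,Δ_x}(s,t) + C G_p(s,x) G_p(x,t)` in `[0,∞]`
for all `s,t ∈ Δ_x`. -/
theorem green_branch_estimate (S : ℕ) (δ₀ : ℝ) (hδ₀ : δ₀ ∈ Set.Ioo (0 : ℝ) 1) (K : ℕ) :
    ∃ C > (0 : ℝ), ∀ p : Word → Word → ℝ, (∀ s t, 0 ≤ p s t) →
      H1 p S → H2 p δ₀ → H3 p δ₀ K →
      ∀ x : Word, ∀ s ∈ Delta x, ∀ t ∈ Delta x,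
        greenE Set.univ p s t ≤
          greenE (Delta x) p s t +
            ENNReal.ofReal C * greenE Set.univ p s x * greenE Set.univ p x t := by
  obtain ⟨hδ, hδ1⟩ := hδ₀
  set M := S * K + S * K with hM
  set N := (shortWords S).card * (S + 1) with hN
  have hc : (0 : ℝ) < (δ₀ ^ M)⁻¹ := by positivity
  refine ⟨((N : ℝ) + 1) * ((δ₀ ^ M)⁻¹ * (δ₀ ^ M)⁻¹), by positivity, ?_⟩
  intro p _ h1 _ h3 x s hs t _
  have hB : ∀ s ∈ Delta x, ∀ u, p s u ≠ 0 → u ∈ Delta x ∨ u ∈ exitBall S x := by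
    intro s hs u hu
    refine exit_mem S x s u hs ?_
    by_contra hcon
    exact hu (h1 s u (by omega))
  refine (green_exit p (Delta x) (exitBall S x) hB s t hs).trans ?_
  gcongr
  set D := ENNReal.ofReal ((δ₀ ^ M)⁻¹) with hD
  have hDpow : D * ENNReal.ofReal δ₀ ^ M = 1 := by
    rw [hD, ← ENNReal.ofReal_pow hδ.le, ← ENNReal.ofReal_mul hc.le,
      inv_mul_cancel₀ (by positivity), ENNReal.ofReal_one]
  have hpow : ∀ k ≤ M, ENNReal.ofReal δ₀ ^ M ≤ ENNReal.ofReal δ₀ ^ k := by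
    intro k hk
    exact pow_le_pow_right_of_le_one' (ENNReal.ofReal_le_one.2 hδ1.le) hk
  have hterm : ∀ v ∈ exitBall S x, greenE Set.univ p s v * greenE Set.univ p v t ≤
      (D * greenE Set.univ p s x) * (D * greenE Set.univ p x t) := by
    intro v hv
    obtain ⟨⟨k, hk, hk'⟩, ⟨l, hl, hl'⟩⟩ := reach_ball h3 S x v hv
    refine mul_le_mul' ?_ ?_
    · calc greenE Set.univ p s v
          = D * (greenE Set.univ p s v * ENNReal.ofReal δ₀ ^ M) := by
            rw [mul_left_comm, hDpow, mul_one]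
        _ ≤ D * greenE Set.univ p s x := by
            gcongr
            refine le_trans ?_ (green_mul_right p k s v x)
            gcongr
            exact (hpow k hk).trans hk'
    · calc greenE Set.univ p v t
          = D * (ENNReal.ofReal δ₀ ^ M * greenE Set.univ p v t) := by
            rw [← mul_assoc, hDpow, one_mul]
        _ ≤ D * greenE Set.univ p x t := by
            gcongr
            refine le_trans ?_ (green_mul_left p l x v t)
            gcongr
            exact (hpow l hl).trans hl'
  refine (Finset.sum_le_sum hterm).trans ?_
  rw [Finset.sum_const, nsmul_eq_mul, ENNReal.ofReal_mul (by positivity),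
    ENNReal.ofReal_mul hc.le, ← hD]
  have hcard : ((exitBall S x).card : ℝ≥0∞) ≤ ENNReal.ofReal ((N : ℝ) + 1) := by
    rw [← ENNReal.ofReal_natCast]
    refine ENNReal.ofReal_le_ofReal ?_
    have : ((exitBall S x).card : ℝ) ≤ N := by exact_mod_cast exitBall_card S x
    linarith
  calc _ ≤ ENNReal.ofReal ((N : ℝ) + 1) *
        ((D * greenE Set.univ p s x) * (D * greenE Set.univ p x t)) := by gcongr
    _ = _ := by ring

end Paper
end

section
/- Fix q ∈ (0,1). For all x, y ∈ I: dim_q(x)·dim_q(y) = Σ_{t∈I} mᵗ_{x,y}·dim_q(t), the sum having only finitely many nonzero terms (dim_q is multiplicative on the free fusion rules). Consequently, for every finitely supported probability measure μ on I and every s ∈ I, Σ_{t∈I} p_μ(s,t) = 1, i.e., p_μ is a stochastic kernel. -/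
open scoped ENNReal

namespace Paper

theorem blockLens_cons (a : Bool) (r : Word) : ∃ k ks, blockLens (a :: r) = k :: ks := by
  induction r generalizing a with
  | nil => exact ⟨1, [], rfl⟩
  | cons b r ih =>
    obtain ⟨k, ks, h⟩ := ih b
    by_cases hab : a = b
    · exact ⟨1, k :: ks, by simp only [blockLens, h, if_pos hab]⟩
    · exact ⟨k + 1, ks, by simp only [blockLens, h, if_neg hab]⟩

theorem qInt_one (q : ℝ) (hq : q ∈ Set.Ioo (0 : ℝ) 1) : qInt q 1 = 1 := by
  have h0 := hq.1
  have h1 : q⁻¹ - q ≠ 0 := by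
    have := (one_lt_inv₀ h0).2 hq.2
    have := hq.2
    linarith
  simp [qInt, h1]

theorem qInt_rec (q : ℝ) (hq : q ∈ Set.Ioo (0 : ℝ) 1) (k : ℕ) :
    qInt q 2 * qInt q (k + 1) = qInt q (k + 2) + qInt q k := by
  have h0 : q ≠ 0 := hq.1.ne'
  have h1 : q⁻¹ - q ≠ 0 := by
    have := (one_lt_inv₀ hq.1).2 hq.2
    have := hq.2
    linarith
  have h2 : qInt q 2 = q⁻¹ + q := by
    unfold qInt
    rw [div_eq_iff h1]
    simp only [zpow_neg, zpow_natCast, Nat.cast_ofNat]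
    have : q ^ (2 : ℤ) = q ^ 2 := by norm_cast
    rw [this]
    field_simp
    ring
  rw [h2]
  unfold qInt
  rw [mul_div_assoc', ← add_div]
  congr 1
  simp only [zpow_neg, zpow_natCast]
  field_simp
  ring

theorem qInt_pos (q : ℝ) (hq : q ∈ Set.Ioo (0 : ℝ) 1) (k : ℕ) : 0 < qInt q (k + 1) := by
  have h1 : 0 < q⁻¹ - q := by
    have := (one_lt_inv₀ hq.1).2 hq.2
    have := hq.2
    linarith
  unfold qInt
  apply div_pos _ h1
  simp only [zpow_neg, zpow_natCast]
  have h2 : q ^ (k + 1) < 1 := pow_lt_one₀ hq.1.le hq.2 (by simp)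
  have h3 := (one_lt_inv₀ (pow_pos hq.1 (k + 1))).2 h2
  linarith

theorem dimq_pos (q : ℝ) (hq : q ∈ Set.Ioo (0 : ℝ) 1) (x : Word) : 0 < dimq q x := by
  unfold dimq
  apply List.prod_pos
  intro a ha
  obtain ⟨L, -, rfl⟩ := List.mem_map.1 ha
  exact qInt_pos q hq L

theorem dimq_nil (q : ℝ) : dimq q [] = 1 := by simp [dimq, blockLens]

theorem dimq_single (q : ℝ) (a : Bool) : dimq q [a] = qInt q 2 := by simp [dimq, blockLens]

theorem dimq_same (q : ℝ) (a : Bool) (r : Word) :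
    dimq q (a :: a :: r) = qInt q 2 * dimq q (a :: r) := by
  obtain ⟨k, ks, h⟩ := blockLens_cons a r
  have h2 : blockLens (a :: a :: r) = 1 :: k :: ks := by
    simp only [blockLens, h, if_true]
  simp [dimq, h, h2]

theorem dimq_diff (q : ℝ) (hq : q ∈ Set.Ioo (0 : ℝ) 1) (a b : Bool) (hab : a ≠ b) (r : Word) :
    dimq q (a :: b :: r) = qInt q 2 * dimq q (b :: r) - dimq q r := by
  obtain ⟨k, ks, h⟩ := blockLens_cons b r
  have h2 : blockLens (a :: b :: r) = (k + 1) :: ks := by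
    simp only [blockLens, h, if_neg hab]
  have r1 := qInt_rec q hq 1
  rw [qInt_one q hq] at r1
  cases r with
  | nil =>
    simp [blockLens] at h
    obtain ⟨rfl, rfl⟩ := h
    simp [dimq, blockLens, hab] at r1 ⊢
    linarith
  | cons c r =>
    obtain ⟨m, ms, h3⟩ := blockLens_cons c r
    by_cases hbc : b = c
    · have h4 : blockLens (b :: c :: r) = 1 :: m :: ms := by
        simp only [blockLens, h3, if_pos hbc]
      rw [h4] at h
      injection h with e1 e2
      subst e1 e2
      simp [dimq, h2, h3, h4] at r1 ⊢
      linear_combination (-(qInt q (m + 1) * (ms.map fun L => qInt q (L + 1)).prod)) * r1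
    · have h4 : blockLens (b :: c :: r) = (m + 1) :: ms := by
        simp only [blockLens, h3, if_neg hbc]
      rw [h4] at h
      injection h with e1 e2
      subst e1 e2
      have r2 := qInt_rec q hq (m + 1)
      simp [dimq, h2, h3, h4]
      linear_combination (-((ms.map fun L => qInt q (L + 1)).prod)) * r2

theorem dimq_app_same (q : ℝ) (hq : q ∈ Set.Ioo (0 : ℝ) 1) (a : Bool) (y : Word) :
    ∀ x : Word, dimq q (x ++ a :: a :: y) = dimq q (x ++ [a]) * dimq q (a :: y)
  | [] => by simp [dimq_same, dimq_single]
  | [c] => by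
    by_cases h : c = a
    · subst h
      simp [dimq_same, dimq_single]; ring
    · simp [dimq_same, dimq_single, dimq_diff q hq c a h, dimq_nil]; ring
  | c :: d :: x => by
    have e1 := dimq_app_same q hq a y (d :: x)
    have e2 := dimq_app_same q hq a y x
    simp only [List.cons_append] at e1 ⊢
    by_cases h : c = d
    · subst h
      rw [dimq_same, dimq_same, e1]; ring
    · rw [dimq_diff q hq c d h, dimq_diff q hq c d h, e1, e2]; ring

theorem dimq_app_diff (q : ℝ) (hq : q ∈ Set.Ioo (0 : ℝ) 1) (a b : Bool) (hab : a ≠ b) (y : Word) :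
    ∀ x : Word, dimq q (x ++ a :: b :: y) =
      dimq q (x ++ [a]) * dimq q (b :: y) - dimq q x * dimq q y
  | [] => by simp [dimq_diff q hq a b hab, dimq_single, dimq_nil]
  | [c] => by
    by_cases h : c = a
    · subst h
      simp [dimq_same, dimq_single, dimq_diff q hq c b hab]; ring
    · simp [dimq_single, dimq_diff q hq c a h, dimq_diff q hq a b hab, dimq_nil]; ring
  | c :: d :: x => by
    have e1 := dimq_app_diff q hq a b hab y (d :: x)
    have e2 := dimq_app_diff q hq a b hab y x
    simp only [List.cons_append] at e1 ⊢
    by_cases h : c = d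
    · subst h
      rw [dimq_same, dimq_same, dimq_same, e1]; ring
    · rw [dimq_diff q hq c d h, dimq_diff q hq c d h, dimq_diff q hq c d h, e1, e2]; ring

/-- The set of words counted by `fuse`. -/
def fuseSet (r s t : Word) : Set Word :=
  {z : Word | ∃ r₀ s₀ : Word, r = r₀ ++ z ∧ s = bar z ++ s₀ ∧ t = r₀ ++ s₀}

theorem fuseSet_finite (r s t : Word) : (fuseSet r s t).Finite := by
  apply (List.finite_toSet r.tails).subset
  rintro z ⟨r₀, s₀, h, -, -⟩
  simp only [List.mem_tails, Set.mem_setOf_eq]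
  exact ⟨r₀, h.symm⟩

theorem bar_snoc (z : Word) (a : Bool) : bar (z ++ [a]) = (!a) :: bar z := by
  simp [bar]

theorem fuse_nil_left (y t : Word) : fuse [] y t = if t = y then 1 else 0 := by
  have : fuseSet [] y t = if t = y then {[]} else ∅ := by
    ext z
    constructor
    · rintro ⟨r₀, s₀, h1, h2, h3⟩
      obtain ⟨rfl, rfl⟩ := List.append_eq_nil_iff.1 h1.symm
      simp [bar] at h2 h3
      simp [h2, h3]
    · split_ifs with h
      · rintro rfl
        exact ⟨[], y, by simp, by simp [bar], by simp [h]⟩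
      · simp
  show (fuseSet [] y t).ncard = _
  rw [this]
  split_ifs <;> simp

theorem fuse_nil_right (x t : Word) : fuse x [] t = if t = x then 1 else 0 := by
  have : fuseSet x [] t = if t = x then {[]} else ∅ := by
    ext z
    constructor
    · rintro ⟨r₀, s₀, h1, h2, h3⟩
      obtain ⟨h4, rfl⟩ := List.append_eq_nil_iff.1 h2.symm
      simp [bar] at h4
      subst h4
      simp at h1 h3
      simp [h1, h3]
    · split_ifs with h
      · rintro rfl
        exact ⟨x, [], by simp, by simp [bar], by simp [h]⟩
      · simp
  show (fuseSet x [] t).ncard = _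
  rw [this]
  split_ifs <;> simp

theorem fuse_snoc_cons (x y t : Word) (a b : Bool) :
    fuse (x ++ [a]) (b :: y) t =
      (if t = x ++ a :: b :: y then 1 else 0) + (if a = b then 0 else fuse x y t) := by
  have : fuseSet (x ++ [a]) (b :: y) t = (if t = x ++ a :: b :: y then {[]} else ∅) ∪
      (if a = b then ∅ else (fun z => z ++ [a]) '' fuseSet x y t) := by
    ext z
    constructor
    · rintro ⟨r₀, s₀, h1, h2, h3⟩
      rcases List.eq_nil_or_concat z with rfl | ⟨z', c, rfl⟩
      · left
        simp [bar] at h1 h2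
        subst h1 h2
        simp [h3]
      · right
        try simp only [List.concat_eq_append] at *
        rw [← List.append_assoc] at h1
        obtain ⟨h5, h4⟩ := List.append_inj' h1 rfl
        simp at h4
        subst h4
        rw [bar_snoc] at h2
        simp at h2
        obtain ⟨rfl, h2⟩ := h2
        rw [if_neg (by simp)]
        exact ⟨z', ⟨r₀, s₀, h5, h2, h3⟩, rfl⟩
    · rintro (h | h)
      · split_ifs at h with h'
        · obtain rfl : z = [] := h
          exact ⟨x ++ [a], b :: y, by simp, by simp [bar], by simp [h']⟩
        · exact h.elim
      · split_ifs at h with h'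
        · exact h.elim
        · obtain ⟨z', ⟨r₀, s₀, h1, h2, h3⟩, rfl⟩ := h
          refine ⟨r₀, s₀, by simp [h1], ?_, h3⟩
          rw [bar_snoc, h2]
          have : b = !a := by revert h'; cases a <;> cases b <;> simp
          simp [this]
  show (fuseSet _ _ t).ncard = _
  rw [this, Set.ncard_union_eq ?_ ?_ ?_]
  · congr 1
    · split_ifs <;> simp
    · split_ifs
      · simp
      · rw [Set.ncard_image_of_injective _ (List.append_left_injective [a])]
        rfl
  · rw [Set.disjoint_left]
    intro z h1 h2
    split_ifs at h1 h2 <;> simp_all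
  · split_ifs <;> simp
  · split_ifs
    · simp
    · exact (fuseSet_finite _ _ _).image _

theorem fuse_main (q : ℝ) (hq : q ∈ Set.Ioo (0 : ℝ) 1) (x : Word) : ∀ y : Word,
    (Function.support fun t => (fuse x y t : ℝ) * dimq q t).Finite ∧
      HasSum (fun t => (fuse x y t : ℝ) * dimq q t) (dimq q x * dimq q y) := by
  have key : ∀ w : Word, (Function.support fun t => (if t = w then dimq q w else 0)).Finite ∧
      HasSum (fun t => (if t = w then dimq q w else 0)) (dimq q w) := by
    intro w
    refine ⟨(Set.finite_singleton w).subset ?_, hasSum_ite_eq w _⟩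
    intro t ht
    by_contra h
    simp at h
    simp [h] at ht
  have e (w t : Word) : (((if t = w then 1 else 0 : ℕ) : ℝ)) * dimq q t =
      if t = w then dimq q w else 0 := by
    split_ifs with h <;> simp [h]
  induction x using List.reverseRecOn with
  | nil =>
    intro y
    simp only [fuse_nil_left, e, dimq_nil, one_mul]
    exact key y
  | append_singleton x a ih =>
    intro y
    cases y with
    | nil =>
      simp only [fuse_nil_right, e, dimq_nil, mul_one]
      exact key _
    | cons b y =>
      simp only [fuse_snoc_cons, Nat.cast_add, add_mul, e]
      by_cases h : a = b
      · subst h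
        simp only [if_true, Nat.cast_zero, zero_mul, add_zero]
        rw [← dimq_app_same q hq]
        exact key _
      · simp only [if_neg h]
        have := dimq_app_diff q hq a b h y x
        obtain ⟨k1, k2⟩ := key (x ++ a :: b :: y)
        obtain ⟨i1, i2⟩ := ih y
        refine ⟨(k1.union i1).subset (Function.support_add _ _), ?_⟩
        convert k2.add i2 using 1
        linarith

/-- Multiplicativity of `dim_q` on the free fusion rules:
`dim_q(x) dim_q(y) = Σ_t mᵗ_{x,y} dim_q(t)` (a finite sum), and consequently `p_μ` is a
stochastic kernel for every finitely supported probability measure `μ`. -/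
theorem dimq_fusion_multiplicative (q : ℝ) (hq : q ∈ Set.Ioo (0 : ℝ) 1) :
    (∀ x y : Word,
      (Function.support fun t => (fuse x y t : ℝ) * dimq q t).Finite ∧
      dimq q x * dimq q y = ∑' t, (fuse x y t : ℝ) * dimq q t) ∧
    ∀ μ : Word → ℝ, IsProbMeasure μ → ∀ s : Word, (∑' t, pMu q μ s t) = 1 := by
  refine ⟨fun x y => ⟨(fuse_main q hq x y).1, (fuse_main q hq x y).2.tsum_eq.symm⟩, ?_⟩
  rintro μ ⟨-, hfin, hsum⟩ s
  have h1 : ∀ t, pMu q μ s t = ∑ r ∈ hfin.toFinset,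
      μ r * (fuse r s t : ℝ) * dimq q t / (dimq q r * dimq q s) := by
    intro t
    apply tsum_eq_sum
    intro r hr
    have : μ r = 0 := by simpa using hr
    simp [this]
  have h2 : ∑ r ∈ hfin.toFinset, μ r = 1 := by
    rw [← hsum]
    refine (tsum_eq_sum ?_).symm
    intro r hr
    simpa using hr
  rw [← h2]
  simp only [h1]
  apply HasSum.tsum_eq
  apply hasSum_sum
  intro r _
  have h3 := ((fuse_main q hq r s).2.mul_left (μ r)).div_const (dimq q r * dimq q s)
  rw [mul_div_assoc, div_self (mul_pos (dimq_pos q hq r) (dimq_pos q hq s)).ne', mul_one] at h3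
  simpa only [mul_assoc] using h3

end Paper
end

section
/- Fix q ∈ (0,1). There exists a constant c > 0, depending only on q, such that for all natural numbers a, b, v: qbinom(a+b+v+1, v) ≥ c²·[v+1]_q·qbinom(a+v, v)·qbinom(b+v, v). (The q-binomial estimate underlying Lemma 2.2 of the paper.) -/
open scoped ENNReal

namespace Paper

theorem aux_prod (r : ℝ) (h0 : 0 < r) (h1 : r < 1) (v : ℕ) :
    Real.exp (-(1 / (1 - r) ^ 2)) ≤ ∏ i ∈ Finset.range v, (1 - r ^ (i + 1)) := by
  have hr : 0 < 1 - r := by linarith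
  have key : ∀ i : ℕ, Real.exp (-(r ^ i / (1 - r))) ≤ 1 - r ^ (i + 1) := by
    intro i
    have hp : 0 < r ^ i := pow_pos h0 i
    have hle : r ^ (i + 1) ≤ r := by
      rw [pow_succ]
      nlinarith [pow_le_one₀ h0.le h1.le (n := i)]
    have hle2 : r ^ (i + 1) ≤ r ^ i := pow_le_pow_of_le_one h0.le h1.le (Nat.le_succ i)
    have hx : 0 < 1 - r ^ (i + 1) := by linarith
    rw [← Real.le_log_iff_exp_le hx]
    refine le_trans ?_ (Real.one_sub_inv_le_log_of_pos hx)
    have e : 1 - (1 - r ^ (i + 1))⁻¹ = -(r ^ (i + 1) / (1 - r ^ (i + 1))) := by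
      field_simp
      ring
    rw [e, neg_le_neg_iff]
    exact div_le_div₀ hp.le hle2 hr (by linarith)
  have hs : ∑ i ∈ Finset.range v, r ^ i ≤ 1 / (1 - r) := by
    rw [geom_sum_eq h1.ne, ← neg_div_neg_eq]
    have : 0 < r ^ v := pow_pos h0 v
    rw [neg_sub, neg_sub]
    exact div_le_div_of_nonneg_right (by linarith) hr.le
  calc Real.exp (-(1 / (1 - r) ^ 2))
      ≤ Real.exp (∑ i ∈ Finset.range v, -(r ^ i / (1 - r))) := by
        apply Real.exp_le_exp.mpr
        rw [Finset.sum_neg_distrib, ← Finset.sum_div, neg_le_neg_iff]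
        calc _ ≤ (1 / (1 - r)) / (1 - r) := div_le_div_of_nonneg_right hs hr.le
          _ = _ := by field_simp
    _ = ∏ i ∈ Finset.range v, Real.exp (-(r ^ i / (1 - r))) := Real.exp_sum _ _
    _ ≤ _ := Finset.prod_le_prod (fun i _ => (Real.exp_pos _).le) (fun i _ => key i)

theorem aux_den (q : ℝ) (h0 : 0 < q) (h1 : q < 1) (v : ℕ) :
    Real.exp (-(1 / (1 - q ^ 2) ^ 2)) ≤ ∏ i ∈ Finset.range v, (1 - q ^ (2 * (v - i))) := by
  refine (aux_prod (q ^ 2) (by positivity) (pow_lt_one₀ h0.le h1 (by norm_num)) v).trans_eq ?_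
  rw [← Finset.prod_range_reflect]
  refine Finset.prod_congr rfl fun i hi => ?_
  have := Finset.mem_range.mp hi
  rw [← pow_mul]
  congr 3
  omega

theorem aux_upper (q : ℝ) (h0 : 0 < q) (h1 : q < 1) (a v : ℕ) :
    qbinom q (a + v) v ≤ (q ^ (v * a))⁻¹ * (Real.exp (-(1 / (1 - q ^ 2) ^ 2)))⁻¹ := by
  unfold qbinom
  rw [zpow_neg, zpow_natCast, Nat.add_sub_cancel, Finset.prod_div_distrib]
  refine mul_le_mul_of_nonneg_left ?_ (by positivity)
  rw [← one_div]
  refine div_le_div₀ zero_le_one ?_ (Real.exp_pos _) (aux_den q h0 h1 v)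
  refine Finset.prod_le_one (fun i _ => ?_) (fun i _ => ?_)
  · linarith [pow_le_one₀ h0.le h1.le (n := 2 * (a + v - i))]
  · linarith [pow_pos h0 (2 * (a + v - i))]

theorem aux_lower (q : ℝ) (h0 : 0 < q) (h1 : q < 1) (a v : ℕ) :
    (q ^ (v * a))⁻¹ ≤ qbinom q (a + v) v := by
  unfold qbinom
  rw [zpow_neg, zpow_natCast, Nat.add_sub_cancel]
  refine le_mul_of_one_le_right (by positivity) ?_
  calc (1 : ℝ) = ∏ i ∈ Finset.range v, (1 : ℝ) := by simp
    _ ≤ _ := Finset.prod_le_prod (fun _ _ => zero_le_one) (fun i hi => ?_)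
  have hi' := Finset.mem_range.mp hi
  have hlt : q ^ (2 * (v - i)) < 1 := pow_lt_one₀ h0.le h1 (by omega)
  rw [one_le_div (by linarith)]
  have : q ^ (2 * (a + v - i)) ≤ q ^ (2 * (v - i)) :=
    pow_le_pow_of_le_one h0.le h1.le (by omega)
  linarith

theorem aux_qInt (q : ℝ) (h0 : 0 < q) (h1 : q < 1) (v : ℕ) :
    0 ≤ qInt q (v + 1) ∧ (1 - q ^ 2) * qInt q (v + 1) ≤ (q ^ v)⁻¹ := by
  unfold qInt
  rw [zpow_neg, zpow_natCast]
  have hq2 : 0 < 1 - q ^ 2 := by nlinarith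
  have e : q⁻¹ - q = (1 - q ^ 2) / q := by field_simp
  have hp := pow_pos h0 v
  have hp1 := pow_pos h0 (v + 1)
  have hl : q ^ (v + 1) ≤ 1 := pow_le_one₀ h0.le h1.le
  have hl2 : 1 ≤ (q ^ (v + 1))⁻¹ := (one_le_inv₀ hp1).mpr hl
  rw [e]
  constructor
  · exact div_nonneg (by linarith) (by positivity)
  · have : (1 - q ^ 2) * (((q ^ (v + 1))⁻¹ - q ^ (v + 1)) / ((1 - q ^ 2) / q))
        = (q ^ v)⁻¹ - q * q ^ (v + 1) := by
      field_simp
      ring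
    rw [this]
    have : 0 < q * q ^ (v + 1) := by positivity
    linarith

/-- The `q`-binomial estimate underlying Lemma 2.2: there is `c > 0`, depending only on
`q`, with `qbinom(a+b+v+1, v) ≥ c² [v+1]_q qbinom(a+v, v) qbinom(b+v, v)`. -/
theorem qbinom_estimate (q : ℝ) (hq : q ∈ Set.Ioo (0 : ℝ) 1) :
    ∃ c > (0 : ℝ), ∀ a b v : ℕ,
      c ^ 2 * qInt q (v + 1) * qbinom q (a + v) v * qbinom q (b + v) v ≤
        qbinom q (a + b + v + 1) v := by
  obtain ⟨h0, h1⟩ := hq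
  have hq2 : 0 < 1 - q ^ 2 := by nlinarith
  set L := Real.exp (-(1 / (1 - q ^ 2) ^ 2)) with hL
  have hLpos : 0 < L := Real.exp_pos _
  refine ⟨L * (1 - q ^ 2), by positivity, fun a b v => ?_⟩
  obtain ⟨hn, hQ⟩ := aux_qInt q h0 h1 v
  have hA := aux_upper q h0 h1 a v
  have hB := aux_upper q h0 h1 b v
  have hB0 : 0 ≤ qbinom q (b + v) v := le_trans (by positivity) (aux_lower q h0 h1 b v)
  have hR := aux_lower q h0 h1 (a + b + 1) v
  rw [← hL] at hA hB
  have e : a + b + v + 1 = a + b + 1 + v := by ring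
  rw [e]
  refine le_trans ?_ hR
  have hc : (L * (1 - q ^ 2)) ^ 2 * qInt q (v + 1) ≤ L ^ 2 * (q ^ v)⁻¹ := by
    have : (1 - q ^ 2) * ((1 - q ^ 2) * qInt q (v + 1)) ≤ 1 * (q ^ v)⁻¹ :=
      mul_le_mul (by nlinarith) hQ (by positivity) zero_le_one
    calc _ = L ^ 2 * ((1 - q ^ 2) * ((1 - q ^ 2) * qInt q (v + 1))) := by ring
      _ ≤ L ^ 2 * (1 * (q ^ v)⁻¹) := mul_le_mul_of_nonneg_left this (by positivity)
      _ = _ := by ring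
  calc _ ≤ L ^ 2 * (q ^ v)⁻¹ * ((q ^ (v * a))⁻¹ * L⁻¹) * ((q ^ (v * b))⁻¹ * L⁻¹) := by
        have hA0 : 0 ≤ qbinom q (a + v) v := le_trans (by positivity) (aux_lower q h0 h1 a v)
        gcongr
    _ = (q ^ (v * (a + b + 1)))⁻¹ := by
        have : q ^ (v * (a + b + 1)) = q ^ v * q ^ (v * a) * q ^ (v * b) := by
          rw [← pow_add, ← pow_add]; congr 1; ring
        rw [this]
        field_simp

end Paper
end

section
/- Fix q ∈ (0,1). Then for all x, y ∈ I one has dim_q(xy) ≤ dim_q(x)·dim_q(y) (where xy is the concatenation), and there exists a constant c > 0, depending only on q, such that dim_q(xy) ≥ c·dim_q(x)·dim_q(y) for all x, y ∈ I. -/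
open scoped ENNReal

namespace Paper

theorem blockLens_ne_nil (a : Bool) (x : Word) : ∃ k ks, blockLens (a :: x) = k :: ks := by
  cases x with
  | nil => exact ⟨1, [], rfl⟩
  | cons b r =>
    rw [blockLens]
    split
    · exact ⟨_, _, rfl⟩
    · split_ifs
      · exact ⟨_, _, rfl⟩
      · exact ⟨_, _, rfl⟩

theorem blockLens_eq (a : Bool) (x : Word) {k : ℕ} {ks : List ℕ} (b : Bool)
    (h : blockLens (b :: x) = k :: ks) :
    blockLens (a :: b :: x) = if a = b then 1 :: (k :: ks) else (k + 1) :: ks := by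
  rw [blockLens, h]

theorem blockLens_append (x y : Word) :
    blockLens (x ++ y) = blockLens x ++ blockLens y ∨
    ∃ l k m r, blockLens x = l ++ [k] ∧ blockLens y = m :: r ∧
      blockLens (x ++ y) = l ++ (k + m) :: r := by
  induction x with
  | nil => left; simp [blockLens]
  | cons a x ih =>
    cases x with
    | nil =>
      cases y with
      | nil => left; simp [blockLens]
      | cons b y =>
        obtain ⟨k, ks, h⟩ := blockLens_ne_nil b y
        have h2 := blockLens_eq a y b h
        by_cases hab : a = b
        · left
          rw [if_pos hab] at h2
          simp [h2, h]
          simp [blockLens]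
        · right
          rw [if_neg hab] at h2
          exact ⟨[], 1, k, ks, by simp [blockLens], h, by simp [h2, add_comm]⟩
    | cons b x =>
      obtain ⟨k, ks, h⟩ := blockLens_ne_nil b x
      obtain ⟨k', ks', h'⟩ := blockLens_ne_nil b (x ++ y)
      have h2 := blockLens_eq a x b h
      have h2' := blockLens_eq a (x ++ y) b h'
      simp only [List.cons_append] at ih ⊢
      rw [h2, h2']
      rw [h, h'] at ih
      rcases ih with ih | ⟨l, k1, m, r, e1, e2, e3⟩
      · left
        simp at ih
        obtain ⟨rfl, rfl⟩ := ih
        split_ifs <;> simp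
      · right
        rw [e2]
        cases l with
        | nil =>
          simp at e1 e3
          obtain ⟨rfl, rfl⟩ := e1
          obtain ⟨rfl, rfl⟩ := e3
          by_cases hab : a = b
          · exact ⟨[1], k, m, _, by simp [hab], rfl, by simp [hab]⟩
          · exact ⟨[], k + 1, m, _, by simp [hab], rfl, by simp [hab]; omega⟩
        | cons c l =>
          simp at e1 e3
          obtain ⟨rfl, rfl⟩ := e1
          obtain ⟨rfl, rfl⟩ := e3
          by_cases hab : a = b
          · exact ⟨1 :: k' :: l, k1, m, r, by simp [hab], rfl, by simp [hab]⟩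
          · exact ⟨(k' + 1) :: l, k1, m, r, by simp [hab], rfl, by simp [hab]⟩

theorem qInt_succ (q : ℝ) (h0 : 0 < q) (h1 : q < 1) (n : ℕ) :
    qInt q (n + 1) = (1 - q ^ (2 * n) * q ^ 2) / (q ^ n * (1 - q ^ 2)) := by
  have h2 : 0 < 1 - q ^ 2 := by nlinarith
  have h3 : q⁻¹ - q = (1 - q ^ 2) / q := by field_simp
  rw [qInt, h3, zpow_neg, zpow_natCast]
  have hn : q ^ n ≠ 0 := by positivity
  have := h2.ne'
  field_simp
  ring

theorem qInt_pos_s16 (q : ℝ) (h0 : 0 < q) (h1 : q < 1) (n : ℕ) : 0 < qInt q (n + 1) := by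
  rw [qInt_succ q h0 h1]
  have h2 : 0 < 1 - q ^ 2 := by nlinarith
  have ha1 : q ^ (2 * n) ≤ 1 := pow_le_one₀ h0.le h1.le
  have : 0 < 1 - q ^ (2 * n) * q ^ 2 := by nlinarith [sq_nonneg q]
  positivity

theorem qInt_bounds (q : ℝ) (h0 : 0 < q) (h1 : q < 1) (k m : ℕ) :
    qInt q (k + m + 1) ≤ qInt q (k + 1) * qInt q (m + 1) ∧
    (1 - q ^ 2) * (qInt q (k + 1) * qInt q (m + 1)) ≤ qInt q (k + m + 1) := by
  simp only [qInt_succ q h0 h1]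
  have h2 : 0 < 1 - q ^ 2 := by nlinarith
  have ha1 : q ^ (2 * k) ≤ 1 := pow_le_one₀ h0.le h1.le
  have hb1 : q ^ (2 * m) ≤ 1 := pow_le_one₀ h0.le h1.le
  have ha0 : 0 < q ^ (2 * k) := by positivity
  have hb0 : 0 < q ^ (2 * m) := by positivity
  have hk : 0 < q ^ k := by positivity
  have hm : 0 < q ^ m := by positivity
  have hs : 0 < q ^ 2 := by positivity
  rw [show 2 * (k + m) = 2 * k + 2 * m by ring, pow_add q (2 * k), pow_add q k]
  generalize q ^ (2 * k) = a at *
  generalize q ^ (2 * m) = b at *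
  generalize q ^ k = u at *
  generalize q ^ m = v at *
  generalize q ^ 2 = s at *
  have e1 : (1 - a * b * s) / (u * v * (1 - s)) =
      ((1 - a * b * s) * (1 - s)) / (u * (1 - s) * (v * (1 - s))) := by
    field_simp
  have e2 : (1 - s) * ((1 - a * s) / (u * (1 - s)) * ((1 - b * s) / (v * (1 - s)))) =
      ((1 - a * s) * (1 - b * s)) / (u * v * (1 - s)) := by
    field_simp
  constructor
  · rw [e1, div_mul_div_comm]
    gcongr ?_ / _
    nlinarith [mul_nonneg hs.le (mul_nonneg (sub_nonneg.2 ha1) (sub_nonneg.2 hb1))]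
  · rw [e2]
    gcongr ?_ / _
    have p1 : 0 ≤ 1 - a * s := by nlinarith
    nlinarith [mul_nonneg p1 (mul_pos hb0 hs).le,
      mul_nonneg (mul_pos ha0 hs).le (sub_nonneg.2 hb1)]

theorem prod_pos_aux (q : ℝ) (h0 : 0 < q) (h1 : q < 1) (l : List ℕ) :
    0 < (l.map fun L => qInt q (L + 1)).prod := by
  apply List.prod_pos
  intro a ha
  obtain ⟨n, -, rfl⟩ := List.mem_map.1 ha
  exact qInt_pos_s16 q h0 h1 n

theorem dimq_concat_aux (q : ℝ) (h0 : 0 < q) (h1 : q < 1) (x y : Word) :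
    dimq q (x ++ y) ≤ dimq q x * dimq q y ∧
    (1 - q ^ 2) * (dimq q x * dimq q y) ≤ dimq q (x ++ y) := by
  have hs : 0 < q ^ 2 := by positivity
  unfold dimq
  rcases blockLens_append x y with h | ⟨l, k, m, r, e1, e2, e3⟩
  · rw [h, List.map_append, List.prod_append]
    have := mul_pos (prod_pos_aux q h0 h1 (blockLens x)) (prod_pos_aux q h0 h1 (blockLens y))
    exact ⟨le_rfl, by nlinarith⟩
  · rw [e1, e2, e3]
    have hp := mul_pos (prod_pos_aux q h0 h1 l) (prod_pos_aux q h0 h1 r)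
    obtain ⟨b1, b2⟩ := qInt_bounds q h0 h1 k m
    simp only [List.map_append, List.prod_append, List.map_cons, List.prod_cons, List.map_nil,
      List.prod_nil]
    have c1 := mul_le_mul_of_nonneg_left b1 hp.le
    have c2 := mul_le_mul_of_nonneg_left b2 hp.le
    constructor <;> linarith

/-- Quasi-multiplicativity of `dim_q` under concatenation:
`dim_q(xy) ≤ dim_q(x) dim_q(y)` and `dim_q(xy) ≥ c dim_q(x) dim_q(y)` for a constant
`c > 0` depending only on `q`. -/
theorem dimq_concat (q : ℝ) (hq : q ∈ Set.Ioo (0 : ℝ) 1) :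
    (∀ x y : Word, dimq q (x ++ y) ≤ dimq q x * dimq q y) ∧
    ∃ c > (0 : ℝ), ∀ x y : Word, c * (dimq q x * dimq q y) ≤ dimq q (x ++ y) := by
  obtain ⟨h0, h1⟩ := hq
  exact ⟨fun x y => (dimq_concat_aux q h0 h1 x y).1, 1 - q ^ 2, by nlinarith,
    fun x y => (dimq_concat_aux q h0 h1 x y).2⟩

end Paper
end
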